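/- Let n be a positive integer and let x, y, x′, y′ be integers. Then 2·d_n(y,x) + 2·d_n(x′,y′) + f_n(x,x′) ≥ ⌊n/2⌋·⌊(n−1)/2⌋ + n − 1 − 2·d_n(y′,y). -/

import Mathlib

/-!
Write `a = d(y,x)`, `d = d(x,x')`, `b = d(x',y')`, `c = d(y',y)`. The four arcs close up to a loop,
so `n ∣ a + d + b + c`; hence `a + b + c ≥ n - d` as soon as `d > 0`. Since
`f = d² - n d + n(n-1)/2`, it remains to bound a quadratic in the integer `d` from below.
If `d > 0`, then `f + 2(n - d)` exceeds the claimed bound by `(d - m - 1)²` for `n = 2m`,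
and by `(d - m - 1)(d - m - 2)` for `n = 2m + 1`, a product of consecutive integers.
If `d = 0`, then `f = n(n-1)/2` already suffices.
-/

/-- Clockwise distance on a circle with `n` positions: `(v - u) mod n`. -/
def dn (n u v : ℤ) : ℤ := (v - u) % n

/-- `C(m,2) = m(m-1)/2`. -/
def c2 (m : ℤ) : ℤ := m * (m - 1) / 2

/-- `f_n(u,v) = C(d_n(u,v),2) + C(n - d_n(u,v),2)`. -/
def fn (n u v : ℤ) : ℤ := c2 (dn n u v) + c2 (n - dn n u v)

lemma two_mul_c2 (k : ℤ) : 2 * c2 k = k * (k - 1) :=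
  Int.mul_ediv_cancel' (Int.even_mul_pred_self k).two_dvd

/-- The four clockwise arcs `y → x → x' → y' → y` form a closed loop. -/
lemma dvd_dn_loop (n x y x' y' : ℤ) :
    n ∣ dn n y x + dn n x x' + dn n x' y' + dn n y' y := by
  unfold dn
  refine ⟨-((x - y) / n + (x' - x) / n + (y' - x') / n + (y - y') / n), ?_⟩
  linear_combination Int.emod_add_mul_ediv (x - y) n + Int.emod_add_mul_ediv (x' - x) n +
    Int.emod_add_mul_ediv (y' - x') n + Int.emod_add_mul_ediv (y - y') n

theorem stmt_6 (n : ℤ) (hn : 0 < n) (x y x' y' : ℤ) :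
    2 * dn n y x + 2 * dn n x' y' + fn n x x' ≥
      (n / 2) * ((n - 1) / 2) + n - 1 - 2 * dn n y' y := by
  have hloop := dvd_dn_loop n x y x' y'
  have ha : 0 ≤ dn n y x := Int.emod_nonneg _ hn.ne'
  have hb : 0 ≤ dn n x' y' := Int.emod_nonneg _ hn.ne'
  have hc : 0 ≤ dn n y' y := Int.emod_nonneg _ hn.ne'
  have hd : 0 ≤ dn n x x' := Int.emod_nonneg _ hn.ne'
  unfold fn
  generalize dn n y x = a at *
  generalize dn n x' y' = b at *
  generalize dn n y' y = c at *
  generalize dn n x x' = d at *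
  have h1 := two_mul_c2 d
  have h2 := two_mul_c2 (n - d)
  rcases Int.even_or_odd' n with ⟨m, rfl | rfl⟩
  · have e1 : 2 * m / 2 = m := by omega
    have e2 : (2 * m - 1) / 2 = m - 1 := by omega
    rw [e1, e2]
    rcases hd.eq_or_lt with rfl | hd
    · nlinarith [sq_nonneg (m - 1)]
    · have := Int.le_of_dvd (by omega) hloop
      nlinarith [sq_nonneg (d - m - 1)]
  · have e1 : (2 * m + 1) / 2 = m := by omega
    have e2 : (2 * m + 1 - 1) / 2 = m := by omega
    rw [e1, e2]
    rcases hd.eq_or_lt with rfl | hd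
    · have hm : 0 ≤ m * (m - 1) := by
        rcases le_or_gt m 0 with h | h <;> nlinarith
      nlinarith
    · have := Int.le_of_dvd (by omega) hloop
      have hq : 0 ≤ (d - m - 1) * (d - m - 2) := by
        rcases le_or_gt (d - m - 1) 0 with h | h <;> nlinarith
      nlinarith
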